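/- Let q be a probability density on ℝ^n with q(x) > 0 for all x, let π̄₁ : ℝ^n → ℝ be measurable with π̄₁(x) > 0 for all x, let p̄ : ℝ^n → [0, ∞) be measurable with Z := ∫ p̄ < ∞, and let T : ℝ^n × ℝ^n → [0, ∞) be a measurable transition density (∫ T(x′|x) dx′ = 1 for every x) satisfying the detailed-balance relation T(x′|x) π̄₁(x) = T(x|x′) π̄₁(x′) for all x, x′. Then ∬ q(x) T(x′|x) · (π̄₁(x)/q(x)) · (p̄(x′)/π̄₁(x′)) dx′ dx = Z. -/

import Mathlib

open MeasureTheory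

/-!
The density `q` cancels, and what remains, `T(x'|x) π(x) / π(x')`, is the transition density of the
time-reversed chain: invariance of `π` says exactly that it integrates to `1` in `x`. Exchanging the
order of integration therefore leaves the integral of the target. Integrating the detailed-balance
relation in `x` gives the invariance of `π`.
-/

section MixtureOfDensities

variable {X Y E : Type*} [MeasurableSpace X] [MeasurableSpace Y]
  {μ : Measure X} {ν : Measure Y} [SFinite μ] [SFinite ν]
  [NormedAddCommGroup E] [NormedSpace ℝ E]
  {K : X × Y → ℝ} {f : Y → E}

theorem integrable_density_smul (hK_meas : Measurable K) (hK_nonneg : ∀ p, 0 ≤ K p)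
    (hK_int : ∀ y, ∫ x, K (x, y) ∂μ = 1) (hf : Integrable f ν) :
    Integrable (fun p : X × Y ↦ K p • f p.2) (μ.prod ν) := by
  have hK_slice (y : Y) : Integrable (fun x ↦ K (x, y)) μ :=
    .of_integral_ne_zero (by simp [hK_int])
  have hnorm (y : Y) : ∫ x, ‖K (x, y) • f y‖ ∂μ = ‖f y‖ := by
    simp_rw [norm_smul, Real.norm_of_nonneg (hK_nonneg _), integral_mul_const, hK_int, one_mul]
  refine (integrable_prod_iff' (f := fun p : X × Y ↦ K p • f p.2)
    (hK_meas.aestronglyMeasurable.smul hf.1.comp_snd)).2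
    ⟨.of_forall fun y ↦ (hK_slice y).smul_const (f y), ?_⟩
  simpa only [hnorm] using hf.norm

theorem integral_integral_density_smul [CompleteSpace E]
    (hK_meas : Measurable K) (hK_nonneg : ∀ p, 0 ≤ K p)
    (hK_int : ∀ y, ∫ x, K (x, y) ∂μ = 1) (hf : Integrable f ν) :
    ∫ x, ∫ y, K (x, y) • f y ∂ν ∂μ = ∫ y, f y ∂ν := by
  rw [integral_integral_swap (integrable_density_smul hK_meas hK_nonneg hK_int hf)]
  simp_rw [integral_smul_const, hK_int, one_smul]

end MixtureOfDensities

section TimeReversal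

variable {X : Type*} {T : X × X → ℝ} {π : X → ℝ}

/-- The transition density of the time reversal of a Markov chain with unnormalized invariant
density `π`, where `T (x', x)` is the density of a move from `x` to `x'`. As for `T`, the first
component of the argument is the new state. -/
noncomputable def timeReversal (T : X × X → ℝ) (π : X → ℝ) (p : X × X) : ℝ :=
  T p.swap * π p.1 / π p.2

theorem timeReversal_nonneg (hT : ∀ p, 0 ≤ T p) (hπ : ∀ x, 0 ≤ π x) (p : X × X) :
    0 ≤ timeReversal T π p :=
  div_nonneg (mul_nonneg (hT _) (hπ _)) (hπ _)

variable [MeasurableSpace X] {μ : Measure X}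

theorem measurable_timeReversal (hT : Measurable T) (hπ : Measurable π) :
    Measurable (timeReversal T π) :=
  ((hT.comp measurable_swap).mul (hπ.comp measurable_fst)).div (hπ.comp measurable_snd)

/-- Invariance of the unnormalized density `π` under moves with transition density `T`, where
`T (x', x)` is the density of a move from `x` to `x'`. It is required at every point, not just
almost everywhere. -/
def IsInvariantDensity (μ : Measure X) (T : X × X → ℝ) (π : X → ℝ) : Prop :=
  ∀ x', ∫ x, T (x', x) * π x ∂μ = π x'

theorem isInvariantDensity_of_detailedBalance (hT_int : ∀ x, ∫ x', T (x', x) ∂μ = 1)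
    (hT_db : ∀ x x', T (x', x) * π x = T (x, x') * π x') :
    IsInvariantDensity μ T π := fun x' ↦
  calc ∫ x, T (x', x) * π x ∂μ
    _ = ∫ x, T (x, x') * π x' ∂μ := by simp_rw [hT_db _ x']
    _ = π x' := by rw [integral_mul_const, hT_int, one_mul]

theorem IsInvariantDensity.integral_timeReversal (h : IsInvariantDensity μ T π) {x' : X}
    (hx' : π x' ≠ 0) : ∫ x, timeReversal T π (x, x') ∂μ = 1 :=
  calc ∫ x, T (x', x) * π x / π x' ∂μ
    _ = (∫ x, T (x', x) * π x ∂μ) / π x' := integral_div _ _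
    _ = 1 := by rw [h x', div_self hx']

/-- Taking `f = p̄` gives the importance weight itself; `f = φ p̄` gives the weighted expectation of
a test function `φ`. -/
theorem ais_one_step_unbiased_general {E : Type*} [NormedAddCommGroup E] [NormedSpace ℝ E]
    [CompleteSpace E] [SFinite μ] {q : X → ℝ} {f : X → E}
    (hq : ∀ x, q x ≠ 0) (hπ_meas : Measurable π) (hπ_pos : ∀ x, 0 < π x) (hf : Integrable f μ)
    (hT_meas : Measurable T) (hT_nonneg : ∀ p, 0 ≤ T p) (hT_inv : IsInvariantDensity μ T π) :
    ∫ x, ∫ x', (q x * T (x', x) * (π x / q x) / π x') • f x' ∂μ ∂μ = ∫ x, f x ∂μ := by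
  have hweight (x x' : X) :
      q x * T (x', x) * (π x / q x) / π x' = timeReversal T π (x, x') := by
    have := hq x
    simp only [timeReversal, Prod.swap_prod_mk]
    field_simp
  simp_rw [hweight]
  exact integral_integral_density_smul (measurable_timeReversal hT_meas hπ_meas)
    (timeReversal_nonneg hT_nonneg fun x ↦ (hπ_pos x).le)
    (fun x' ↦ hT_inv.integral_timeReversal (hπ_pos x').ne') hf

end TimeReversal

/-- Unbiasedness of the AIS weight with a single bridging density: if `T (x', x)` is a
transition density satisfying detailed balance with respect to the positive unnormalized
bridging density `π̄₁`, then the expected importance weight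
`(π̄₁(x)/q(x)) · (p̄(x′)/π̄₁(x′))` under `x ∼ q`, `x′ ∼ T(·|x)` equals the normalizing
constant `Z = ∫ p̄` of the unnormalized target `p̄`. -/
theorem ais_one_step_unbiased
    {n : ℕ} (q pibar pbar : (Fin n → ℝ) → ℝ)
    (T : (Fin n → ℝ) × (Fin n → ℝ) → ℝ)
    (hq_meas : Measurable q) (hq_pos : ∀ x, 0 < q x)
    (hq_int : ∫ x, q x = 1)
    (hpi_meas : Measurable pibar) (hpi_pos : ∀ x, 0 < pibar x)
    (hp_meas : Measurable pbar) (hp_nonneg : ∀ x, 0 ≤ pbar x)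
    (hp_integrable : Integrable pbar)
    (hT_meas : Measurable T) (hT_nonneg : ∀ x' x, 0 ≤ T (x', x))
    (hT_int : ∀ x, ∫ x', T (x', x) = 1)
    (hT_db : ∀ x x', T (x', x) * pibar x = T (x, x') * pibar x') :
    ∫ x, ∫ x', q x * T (x', x) * (pibar x / q x) * (pbar x' / pibar x') =
      ∫ x, pbar x := by
  simpa only [smul_eq_mul, div_mul_eq_mul_div, ← mul_div_assoc] using
    ais_one_step_unbiased_general (fun x ↦ (hq_pos x).ne') hpi_meas hpi_pos hp_integrable hT_meas
      (fun p ↦ hT_nonneg p.1 p.2) (isInvariantDensity_of_detailedBalance hT_int hT_db)
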